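/- arXiv:2011.10876 — 2 statements merged into one kernel-verified Lean document; each statement's English description precedes it below -/
import Mathlib

section
/- If the network Σ is well-posed, i.e. f maps X × U into X, then there exist a constant C > 0 and a function κ of class K∞ such that for all i ∈ ℕ and all x_i ∈ ℝ^{n_i}, x̄_i ∈ X(I_i), u_i ∈ ℝ^{p_i} one has |f_i(x_i, x̄_i, u_i)| ≤ C + κ(|x_i|) + κ(|x̄_i|) + κ(|u_i|). -/
/-!
The core is a sliding hump argument. If the local maps were not uniformly bounded on the ball of
radius `r`, then, as every coordinate enters only finitely many of them, one could choose local
maps `f_{k 0}, f_{k 1}, …` depending on pairwise disjoint sets of coordinates, together with points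
of the ball at which `‖f_{k n}‖ > n`. Gluing these points gives one bounded state and one bounded
input on which the network map is unbounded, against well-posedness. The bounds on the balls of
integer radius are majorized by a monotone function of the radius, whose forward average is
continuous and hence yields `κ`.
-/

noncomputable section

/-- Class `K` comparison functions on `[0,∞)`. -/
def ClassK (γ : ℝ → ℝ) : Prop :=
  ContinuousOn γ (Set.Ici 0) ∧ StrictMonoOn γ (Set.Ici 0) ∧ γ 0 = 0

/-- Class `K∞` comparison functions: class `K` and unbounded. -/
def ClassKinf (γ : ℝ → ℝ) : Prop :=
  ClassK γ ∧ ∀ c : ℝ, ∃ s : ℝ, 0 ≤ s ∧ c < γ s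

section Network

variable {E : ℕ → Type*} [∀ i, NormedAddCommGroup (E i)]
variable {P : ℕ → Type*} [∀ i, NormedAddCommGroup (P i)]

/-- Membership in `ℓ∞(ℕ,(n_i))`: a uniformly bounded sequence. -/
def Bdd {G : ℕ → Type*} [∀ i, NormedAddCommGroup (G i)] (x : ∀ i, G i) : Prop :=
  ∃ C : ℝ, ∀ i, ‖x i‖ ≤ C

variable (I : ℕ → Finset ℕ)

/-- The network map `f(x,u) = (f_i(x_i, x̄_i, u_i))_{i∈ℕ}`. -/
def netF (f : ∀ i, E i → ((j : I i) → E j.1) → P i → E i)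
    (x : ∀ i, E i) (u : ∀ i, P i) : ∀ i, E i :=
  fun i => f i (x i) (fun j => x j.1) (u i)

open Set Function Bornology

section ComparisonFunctions

theorem ClassK.nonneg {κ : ℝ → ℝ} (hκ : ClassK κ) {s : ℝ} (hs : 0 ≤ s) : 0 ≤ κ s :=
  hκ.2.2.symm.le.trans (hκ.2.1.monotoneOn self_mem_Ici hs hs)

theorem ClassK.apply_max_le_add {κ : ℝ → ℝ} (hκ : ClassK κ) {a b : ℝ} (ha : 0 ≤ a) (hb : 0 ≤ b) :
    κ (max a b) ≤ κ a + κ b := by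
  rcases max_choice a b with h | h <;> rw [h]
  · exact le_add_of_nonneg_right (hκ.nonneg hb)
  · exact le_add_of_nonneg_left (hκ.nonneg ha)

theorem classKinf_id_add_sub {A : ℝ → ℝ} (hcont : ContinuousOn A (Ici 0))
    (hmono : MonotoneOn A (Ici 0)) : ClassKinf fun s => s + (A s - A 0) := by
  refine ⟨⟨continuousOn_id.add (hcont.sub continuousOn_const), ?_,
    by simp only [sub_self, add_zero]⟩, fun c => ⟨|c| + 1, by positivity, ?_⟩⟩
  · exact strictMonoOn_id.add_monotone fun s hs t ht hst => sub_le_sub_right (hmono hs ht hst) _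
  · have hA : A 0 ≤ A (|c| + 1) := hmono self_mem_Ici (mem_Ici.2 (by positivity)) (by positivity)
    linarith [le_abs_self c]

/-- The average of `φ` over `[s, s + 1]`, used to replace a monotone `φ` by a continuous monotone
majorant. -/
def forwardAverage (φ : ℝ → ℝ) (s : ℝ) : ℝ :=
  ∫ t in (0 : ℝ)..1, φ (s + t)

variable {φ : ℝ → ℝ}

theorem monotone_forwardAverage (hφ : Monotone φ) : Monotone (forwardAverage φ) := by
  intro a b hab
  have hint (s : ℝ) : IntervalIntegrable (fun t => φ (s + t)) MeasureTheory.volume 0 1 :=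
    (hφ.comp (add_right_mono (a := s))).intervalIntegrable
  exact intervalIntegral.integral_mono zero_le_one (hint a) (hint b)
    fun t => hφ (add_le_add_left hab t)

theorem continuous_forwardAverage (hφ : Monotone φ) : Continuous (forwardAverage φ) := by
  have hint (a b : ℝ) : IntervalIntegrable φ MeasureTheory.volume a b := hφ.intervalIntegrable
  have hprim : forwardAverage φ =
      fun s => (∫ t in (0 : ℝ)..(s + 1), φ t) - ∫ t in (0 : ℝ)..s, φ t := by
    funext s
    rw [forwardAverage, intervalIntegral.integral_comp_add_left, add_zero,
      intervalIntegral.integral_interval_sub_left (hint _ _) (hint _ _)]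
  have hcont := intervalIntegral.continuous_primitive hint 0
  rw [hprim]
  exact (hcont.comp (continuous_add_const 1)).sub hcont

theorem le_forwardAverage (hφ : Monotone φ) (s : ℝ) : φ s ≤ forwardAverage φ s := by
  have hconst : ∫ _ in (0 : ℝ)..1, φ s = φ s := by simp
  rw [← hconst]
  exact intervalIntegral.integral_mono_on zero_le_one intervalIntegrable_const
    (hφ.comp (add_right_mono (a := s))).intervalIntegrable
    fun t ht => hφ (le_add_of_nonneg_right ht.1)

theorem forwardAverage_le (hφ : Monotone φ) (s : ℝ) : forwardAverage φ s ≤ φ (s + 1) := by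
  have hconst : ∫ _ in (0 : ℝ)..1, φ (s + 1) = φ (s + 1) := by simp
  rw [← hconst]
  exact intervalIntegral.integral_mono_on zero_le_one
    (hφ.comp (add_right_mono (a := s))).intervalIntegrable intervalIntegrable_const
    fun t ht => hφ (add_le_add_right ht.2 s)

theorem exists_classKinf_le_add (hφ : Monotone φ) :
    ∃ κ, ClassKinf κ ∧ ∀ s, 0 ≤ s → φ s ≤ φ 1 + κ s := by
  refine ⟨fun s => s + (forwardAverage φ s - forwardAverage φ 0),
    classKinf_id_add_sub (continuous_forwardAverage hφ).continuousOn
      ((monotone_forwardAverage hφ).monotoneOn _), fun s hs => ?_⟩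
  have hzero : forwardAverage φ 0 ≤ φ 1 := by simpa only [zero_add] using forwardAverage_le hφ 0
  linarith [le_forwardAverage hφ s]

end ComparisonFunctions

section SlidingHump

theorem exists_seq_pairwise_of_finite_setOf_not {α : Type*} {r : α → α → Prop}
    [Std.Symm r] (hr : ∀ a, {b | ¬ r a b}.Finite) {A : ℕ → Set α} (hA : ∀ n, (A n).Infinite) :
    ∃ a : ℕ → α, (∀ n, a n ∈ A n) ∧ Pairwise (r on a) := by
  classical
  have hnext (n : ℕ) (F : Finset α) : ∃ b ∈ A n, ∀ a ∈ F, r a b := by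
    have hbad : (⋃ a ∈ F, {b | ¬ r a b}).Finite := F.finite_toSet.biUnion fun a _ => hr a
    obtain ⟨b, hbA, hb⟩ := (hA n).exists_notMem_finite hbad
    exact ⟨b, hbA, by simpa using hb⟩
  choose next next_mem next_rel using hnext
  let chosen : ℕ → Finset α := Nat.rec ∅ fun n F => insert (next n F) F
  have hmono : Monotone chosen := monotone_nat_of_le_succ fun _ => Finset.subset_insert _ _
  refine ⟨fun n => next n (chosen n), fun n => next_mem _ _, (Std.Symm.pairwise_on _).2 ?_⟩
  exact fun m n hmn => next_rel _ _ _ (hmono hmn (Finset.mem_insert_self _ _))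

theorem exists_forall_eqOn_of_pairwise_disjoint {ι β : Type*} [Nonempty β] {Z : ι → Type*}
    {s : β → Set ι} (hs : Pairwise (Disjoint on s)) (z : β → ∀ j, Z j) :
    ∃ w : ∀ j, Z j, ∀ b, ∀ j ∈ s b, w j = z b j := by
  have howner (j : ι) : ∃ b, ∀ c, j ∈ s c → c = b := by
    by_cases h : ∃ b, j ∈ s b
    · obtain ⟨b, hb⟩ := h
      exact ⟨b, fun c hc => hs.eq (not_disjoint_iff.2 ⟨j, hc, hb⟩)⟩
    · exact ⟨Classical.arbitrary β, fun c hc => absurd ⟨c, hc⟩ h⟩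
  choose owner howner using howner
  exact ⟨fun j => z (owner j) j, fun b j hj => by simp only [← howner j b hj]⟩

theorem finite_setOf_not_disjoint {ι α : Type*} {N : α → Set ι} (hfin : ∀ a, (N a).Finite)
    (hloc : ∀ j, {a | j ∈ N a}.Finite) (a : α) : {b | ¬ Disjoint (N a) (N b)}.Finite :=
  ((hfin a).biUnion fun j _ => hloc j).subset fun _ hb =>
    let ⟨_, hja, hjb⟩ := not_disjoint_iff.1 hb
    mem_biUnion hja hjb

theorem exists_forall_le_of_dependsOn {ι α : Type*} {Z : ι → Type*} {g : α → (∀ j, Z j) → ℝ}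
    {N : α → Set ι} (hN : ∀ a, {b | ¬ Disjoint (N a) (N b)}.Finite)
    (hdep : ∀ a, DependsOn (g a) (N a)) (hbdd : ∀ a, BddAbove (range (g a)))
    (hpt : ∀ z, BddAbove (range fun a => g a z)) : ∃ M, ∀ a z, g a z ≤ M := by
  by_contra! hunb
  have hinf (n : ℕ) : {a | ∃ z, (n : ℝ) < g a z}.Infinite := by
    intro hfin
    obtain ⟨B, hB⟩ := hfin.bddAbove_biUnion.2 fun a _ => hbdd a
    obtain ⟨a, z, haz⟩ := hunb (max n B)
    obtain ⟨hn, hBlt⟩ := max_lt_iff.1 haz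
    exact hBlt.not_ge (hB (mem_biUnion (show a ∈ {a | ∃ z, (n : ℝ) < g a z} from ⟨z, hn⟩) ⟨z, rfl⟩))
  obtain ⟨a, ha, hdisj⟩ :=
    exists_seq_pairwise_of_finite_setOf_not (r := Disjoint on N) hN hinf
  choose z hz using ha
  obtain ⟨w, hw⟩ := exists_forall_eqOn_of_pairwise_disjoint (s := N ∘ a) hdisj z
  obtain ⟨C, hC⟩ := hpt w
  obtain ⟨n, hn⟩ := exists_nat_gt C
  have hglue : g (a n) w = g (a n) (z n) := hdep (a n) (hw n)
  have hle : g (a n) w ≤ C := hC ⟨a n, rfl⟩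
  linarith [hz n]

end SlidingHump

theorem isBounded_image_of_continuous {α β : Type*} [PseudoMetricSpace α] [ProperSpace α]
    [PseudoMetricSpace β] {g : α → β} (hg : Continuous g) {s : Set α} (hs : IsBounded s) :
    IsBounded (g '' s) :=
  (hs.isCompact_closure.image hg).isBounded.subset (image_mono subset_closure)

theorem exists_extension_norm_le {ι : Type*} {X : ι → Type*} [∀ i, SeminormedAddCommGroup (X i)]
    {i : ι} {s : Finset ι} (hi : i ∉ s) (a : X i) (b : ∀ j : s, X j) :
    ∃ x : ∀ j, X j, x i = a ∧ (∀ j : s, x j = b j) ∧ ∀ j, ‖x j‖ ≤ max ‖a‖ ‖b‖ := by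
  classical
  refine ⟨update (fun j => if h : j ∈ s then b ⟨j, h⟩ else 0) i a, update_self .., fun j => ?_, ?_⟩
  · rw [update_of_ne (ne_of_mem_of_not_mem j.2 hi), dif_pos j.2]
  · refine (forall_update_iff _ fun j y => ‖y‖ ≤ max ‖a‖ ‖b‖).2 ⟨le_max_left _ _, fun j _ => ?_⟩
    split_ifs with h
    · exact (norm_le_pi_norm b ⟨j, h⟩).trans (le_max_right _ _)
    · exact norm_zero.le.trans (le_max_of_le_left (norm_nonneg a))

section GeneralNetwork

variable {ι : Type*} {X U Y : ι → Type*} [∀ i, SeminormedAddCommGroup (X i)]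
  [∀ i, SeminormedAddCommGroup (U i)] [∀ i, SeminormedAddCommGroup (Y i)]
  {N : ι → Finset ι} {f : ∀ i, X i → ((j : N i) → X j) → U i → Y i}

/-- Each local map `f i` of a network sends bounded sets to bounded sets. For continuous
local maps between finite-dimensional spaces this holds by compactness. -/
def MapsBoundedToBounded (f : ∀ i, X i → ((j : N i) → X j) → U i → Y i) : Prop :=
  ∀ i, ∀ s : Set (X i × ((j : N i) → X j) × U i),
    IsBounded s → IsBounded ((fun q => f i q.1 q.2.1 q.2.2) '' s)

/-- Well-posedness of a network over an arbitrary index type: bounded states and inputs have bounded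
images. For networks over `ℕ` this unfolds to the condition on `netF` and `Bdd`. -/
def WellPosed (f : ∀ i, X i → ((j : N i) → X j) → U i → Y i) : Prop :=
  ∀ (x : ∀ i, X i) (u : ∀ i, U i), (∃ C : ℝ, ∀ i, ‖x i‖ ≤ C) → (∃ C : ℝ, ∀ i, ‖u i‖ ≤ C) →
    ∃ C : ℝ, ∀ i, ‖f i (x i) (fun j => x j) (u i)‖ ≤ C

theorem WellPosed.exists_bound_of_forall_norm_le (hwp : WellPosed f)
    (hloc : ∀ i, {j | i ∈ N j}.Finite) (hf : MapsBoundedToBounded f) (r : ℝ) :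
    ∃ M : ℝ, ∀ (i : ι) (x : ∀ j, X j) (u : ∀ j, U j), (∀ j, ‖x j‖ ≤ r) → (∀ j, ‖u j‖ ≤ r) →
      ‖f i (x i) (fun j => x j) (u i)‖ ≤ M := by
  let Z (j : ι) := {p : X j × U j // ‖p.1‖ ≤ r ∧ ‖p.2‖ ≤ r}
  let g (i : ι) (z : ∀ j, Z j) : ℝ := ‖f i (z i).1.1 (fun j => (z j).1.1) (z i).1.2‖
  let S (i : ι) : Set ι := insert i (N i)
  have hmeet : ∀ i, {k | ¬ Disjoint (S i) (S k)}.Finite :=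
    finite_setOf_not_disjoint (fun i => (N i).finite_toSet.insert i) fun j =>
      ((finite_singleton j).union (hloc j)).subset fun i hi => hi.imp Eq.symm id
  have hdep (i : ι) : DependsOn (g i) (S i) := by
    intro z z' h
    have hnbr : (fun j : N i => (z j).1.1) = fun j : N i => (z' j).1.1 :=
      funext fun j => by rw [h j (mem_insert_of_mem i j.2)]
    simp only [g, hnbr, h i (mem_insert i _)]
  have hbdd (i : ι) : BddAbove (range (g i)) := by
    obtain ⟨M, hM⟩ := isBounded_iff_forall_norm_le.1
      (hf i _ (Metric.isBounded_closedBall (x := 0) (r := r)))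
    refine ⟨M, forall_mem_range.2 fun z =>
      hM _ ⟨((z i).1.1, fun j => (z j).1.1, (z i).1.2), ?_, rfl⟩⟩
    have hr : 0 ≤ r := (norm_nonneg _).trans (z i).2.1
    rw [mem_closedBall_zero_iff, norm_prod_le_iff, norm_prod_le_iff]
    exact ⟨(z i).2.1, (pi_norm_le_iff_of_nonneg hr).2 fun j => (z j).2.1, (z i).2.2⟩
  obtain ⟨M, hM⟩ := exists_forall_le_of_dependsOn hmeet hdep hbdd fun z => by
    obtain ⟨C, hC⟩ := hwp (fun j => (z j).1.1) (fun j => (z j).1.2)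
      ⟨r, fun j => (z j).2.1⟩ ⟨r, fun j => (z j).2.2⟩
    exact ⟨C, forall_mem_range.2 hC⟩
  exact ⟨M, fun i x u hx hu => hM i fun j => ⟨(x j, u j), hx j, hu j⟩⟩

theorem WellPosed.exists_bound_of_norm_le (hwp : WellPosed f) (hself : ∀ i, i ∉ N i)
    (hloc : ∀ i, {j | i ∈ N j}.Finite) (hf : MapsBoundedToBounded f) (r : ℝ) :
    ∃ M : ℝ, ∀ (i : ι) (q : X i × ((j : N i) → X j) × U i), ‖q‖ ≤ r →
      ‖f i q.1 q.2.1 q.2.2‖ ≤ M := by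
  classical
  obtain ⟨M, hM⟩ := hwp.exists_bound_of_forall_norm_le hloc hf r
  refine ⟨M, fun i ⟨a, b, c⟩ hq => ?_⟩
  obtain ⟨ha, hb, hc⟩ : ‖a‖ ≤ r ∧ ‖b‖ ≤ r ∧ ‖c‖ ≤ r := by simpa only [norm_prod_le_iff] using hq
  obtain ⟨x, hxi, hxN, hx⟩ := exists_extension_norm_le (hself i) a b
  have hu : ∀ j, ‖Pi.single (M := U) i c j‖ ≤ r :=
    (forall_update_iff _ fun j y => ‖y‖ ≤ r).2
      ⟨hc, fun j _ => norm_zero.le.trans ((norm_nonneg c).trans hc)⟩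
  have hxu := hM i x (Pi.single i c) (fun j => (hx j).trans (max_le ha hb)) hu
  rwa [hxi, Pi.single_eq_same, funext hxN] at hxu

theorem stmt1_general (hself : ∀ i, i ∉ N i) (hloc : ∀ i, {j | i ∈ N j}.Finite)
    (hf : MapsBoundedToBounded f) (hwp : WellPosed f) :
    ∃ C : ℝ, 0 < C ∧ ∃ κ : ℝ → ℝ, ClassKinf κ ∧
      ∀ (i : ι) (xi : X i) (xb : (j : N i) → X j) (ui : U i),
        ‖f i xi xb ui‖ ≤ C + κ ‖xi‖ + κ ‖xb‖ + κ ‖ui‖ := by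
  choose M hM using fun n : ℕ => hwp.exists_bound_of_norm_le hself hloc hf n
  let φ (s : ℝ) : ℝ := partialSups M ⌈s⌉₊
  have hφ : Monotone φ := (partialSups M).monotone.comp Nat.ceil_mono
  obtain ⟨κ, hκ, hφκ⟩ := exists_classKinf_le_add hφ
  refine ⟨max (φ 1) 1, lt_max_of_lt_right one_pos, κ, hκ, fun i xi xb ui => ?_⟩
  let q : X i × ((j : N i) → X j) × U i := (xi, xb, ui)
  have hκq : κ ‖q‖ ≤ κ ‖xi‖ + (κ ‖xb‖ + κ ‖ui‖) :=
    (hκ.1.apply_max_le_add (norm_nonneg _) (norm_nonneg (xb, ui))).trans <|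
      add_le_add_right (hκ.1.apply_max_le_add (norm_nonneg _) (norm_nonneg _)) _
  calc ‖f i xi xb ui‖ ≤ M ⌈‖q‖⌉₊ := hM _ i q (Nat.le_ceil _)
    _ ≤ φ ‖q‖ := le_partialSups M _
    _ ≤ φ 1 + κ ‖q‖ := hφκ _ (norm_nonneg q)
    _ ≤ max (φ 1) 1 + (κ ‖xi‖ + (κ ‖xb‖ + κ ‖ui‖)) := add_le_add (le_max_left _ _) hκq
    _ = max (φ 1) 1 + κ ‖xi‖ + κ ‖xb‖ + κ ‖ui‖ := by ring

end GeneralNetwork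

theorem stmt1
    [∀ i, NormedSpace ℝ (E i)] [∀ i, FiniteDimensional ℝ (E i)] [∀ i, Nontrivial (E i)]
    [∀ i, NormedSpace ℝ (P i)] [∀ i, FiniteDimensional ℝ (P i)] [∀ i, Nontrivial (P i)]
    (hself : ∀ i, i ∉ I i)
    (hloc : ∀ i, {j | i ∈ I j}.Finite)
    (f : ∀ i, E i → ((j : I i) → E j.1) → P i → E i)
    (hf : ∀ i, Continuous fun q : E i × ((j : I i) → E j.1) × P i => f i q.1 q.2.1 q.2.2)
    (hwp : ∀ (x : ∀ i, E i) (u : ∀ i, P i), Bdd x → Bdd u → Bdd (netF I f x u)) :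
    ∃ C : ℝ, 0 < C ∧ ∃ κ : ℝ → ℝ, ClassKinf κ ∧
      ∀ (i : ℕ) (xi : E i) (xb : (j : I i) → E j.1) (ui : P i),
        ‖f i xi xb ui‖ ≤ C + κ ‖xi‖ + κ ‖xb‖ + κ ‖ui‖ := by
  exact stmt1_general hself hloc (fun i _ hs => isBounded_image_of_continuous (hf i) hs) hwp

end Network
end
end

section
/- Let Σ be well-posed and A ⊆ X a nonempty closed set. Then Σ is eISS with respect to A if and only if f is K-bounded with respect to A with κ₁ a linear function, and there exist M ∈ ℕ, constants C ≥ 1, ρ ∈ [0,1) and γ of class K such that for every ξ ∈ X and every admissible input u, |x(Mk,ξ,u)|_A ≤ max{C ρ^k |ξ|_A, γ(‖u‖_∞)} for all k ∈ ℕ₀ (i.e. Σ^M is eISS with respect to A for some M). -/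
noncomputable section

/-- Class `KL` comparison functions. -/
def ClassKL (β : ℝ → ℝ → ℝ) : Prop :=
  ContinuousOn (fun p : ℝ × ℝ => β p.1 p.2) (Set.Ici 0 ×ˢ Set.Ici 0) ∧
    (∀ t : ℝ, 0 ≤ t → ClassK fun r => β r t) ∧
    (∀ r : ℝ, 0 < r → StrictAntiOn (β r) (Set.Ici 0) ∧
      Filter.Tendsto (fun t => β r t) Filter.atTop (nhds 0))

section System

variable {E : ℕ → Type*} [∀ i, NormedAddCommGroup (E i)]
variable {P : ℕ → Type*} [∀ i, NormedAddCommGroup (P i)]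

/-- Solution of the discrete-time system `x⁺ = F(x,u)` on `X = ℓ∞(ℕ,(n_i))`. -/
def traj (F : lp E ⊤ → lp P ⊤ → lp E ⊤) (ξ : lp E ⊤) (u : ℕ → lp P ⊤) : ℕ → lp E ⊤
  | 0 => ξ
  | k + 1 => F (traj F ξ u k) (u k)

/-- Admissible external inputs: uniformly bounded sequences in `U`. -/
def AdmInput (u : ℕ → lp P ⊤) : Prop :=
  ∃ C : ℝ, ∀ k, ‖u k‖ ≤ C

/-- `‖u‖_∞ = sup_k |u(k)|_∞`. -/
def inputNorm (u : ℕ → lp P ⊤) : ℝ :=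
  ⨆ k, ‖u k‖

/-- `Σ` is input-to-state stable with respect to the set `A`. -/
def ISS (F : lp E ⊤ → lp P ⊤ → lp E ⊤) (A : Set (lp E ⊤)) : Prop :=
  ∃ β γ : _, ClassKL β ∧ ClassK γ ∧
    ∀ (ξ : lp E ⊤) (u : ℕ → lp P ⊤), AdmInput u →
      ∀ k : ℕ, Metric.infDist (traj F ξ u k) A ≤
        max (β (Metric.infDist ξ A) (k : ℝ)) (γ (inputNorm u))

/-- `Σ` is exponentially input-to-state stable with respect to the set `A`. -/
def eISS (F : lp E ⊤ → lp P ⊤ → lp E ⊤) (A : Set (lp E ⊤)) : Prop :=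
  ∃ C ρ : ℝ, ∃ γ : ℝ → ℝ, 1 ≤ C ∧ 0 ≤ ρ ∧ ρ < 1 ∧ ClassK γ ∧
    ∀ (ξ : lp E ⊤) (u : ℕ → lp P ⊤), AdmInput u →
      ∀ k : ℕ, Metric.infDist (traj F ξ u k) A ≤
        max (C * ρ ^ k * Metric.infDist ξ A) (γ (inputNorm u))

/-- `f` is `K`-bounded with respect to `A`. -/
def KBounded (F : lp E ⊤ → lp P ⊤ → lp E ⊤) (A : Set (lp E ⊤)) : Prop :=
  ∃ κ₁ κ₂ : ℝ → ℝ, ClassK κ₁ ∧ ClassK κ₂ ∧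
    ∀ (ξ : lp E ⊤) (μ : lp P ⊤),
      Metric.infDist (F ξ μ) A ≤ κ₁ (Metric.infDist ξ A) + κ₂ ‖μ‖

/-!
For the hard direction, cut the time axis into blocks of length `M`. Sampling at multiples of `M`
gives exponential decay up to the input gain, and inside a block the linear growth bound with the
discrete Grönwall inequality loses only a constant factor and adds a class `K` term in the input.
The rate `ρ` per block becomes a rate `σ` per step with `ρ ≤ σ ^ M`, and the resulting sum is turned
into a maximum by `x + y ≤ max (2 * x) (2 * y)`. The distance to `A` enters only as a nonnegative
function `V` of the state.
-/

namespace ClassK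

variable {γ κ : ℝ → ℝ}

theorem apply_le_apply (hγ : ClassK γ) {s t : ℝ} (hs : 0 ≤ s) (hst : s ≤ t) : γ s ≤ γ t :=
  hγ.2.1.monotoneOn hs (hs.trans hst) hst

theorem nonneg_s7 (hγ : ClassK γ) {s : ℝ} (hs : 0 ≤ s) : 0 ≤ γ s :=
  hγ.2.2 ▸ hγ.apply_le_apply le_rfl hs

theorem add (hγ : ClassK γ) (hκ : ClassK κ) : ClassK fun s => γ s + κ s :=
  ⟨hγ.1.add hκ.1, hγ.2.1.add hκ.2.1, by simp only [hγ.2.2, hκ.2.2, add_zero]⟩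

theorem const_mul (hγ : ClassK γ) {a : ℝ} (ha : 0 < a) : ClassK fun s => a * γ s :=
  ⟨continuousOn_const.mul hγ.1,
    fun _ hs _ ht hst => mul_lt_mul_of_pos_left (hγ.2.1 hs ht hst) ha,
    by simp only [hγ.2.2, mul_zero]⟩

end ClassK

theorem add_le_max_two_mul {R : Type*} [Semiring R] [LinearOrder R] [IsOrderedRing R] (x y : R) :
    x + y ≤ max (2 * x) (2 * y) := by
  rw [← mul_max_of_nonneg _ _ zero_le_two, two_mul]
  exact add_le_add (le_max_left x y) (le_max_right x y)

open Filter Topology in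
theorem exists_lt_one_le_pow {ρ : ℝ} (hρ : ρ < 1) (M : ℕ) :
    ∃ σ : ℝ, 0 < σ ∧ σ < 1 ∧ ρ ≤ σ ^ M := by
  have hpow : Tendsto (fun σ : ℝ => σ ^ M) (𝓝[<] 1) (𝓝 1) :=
    tendsto_nhdsWithin_of_tendsto_nhds (by simpa using (continuous_pow M).tendsto (1 : ℝ))
  have hpos : ∀ᶠ σ : ℝ in 𝓝[<] 1, 0 < σ := nhdsWithin_le_nhds (lt_mem_nhds one_pos)
  obtain ⟨σ, hσ0, hσ1, hρσ⟩ :=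
    (hpos.and (eventually_mem_nhdsWithin.and (hpow.eventually_const_lt hρ))).exists
  exact ⟨σ, hσ0, hσ1, hρσ.le⟩

theorem pow_div_le_of_le_pow {𝕜 : Type*} [Field 𝕜] [LinearOrder 𝕜] [IsStrictOrderedRing 𝕜]
    {ρ σ : 𝕜} {M : ℕ} (hM : 0 < M) (hρ : 0 ≤ ρ) (hσ0 : 0 < σ) (hσ1 : σ ≤ 1) (hρσ : ρ ≤ σ ^ M)
    (n : ℕ) : ρ ^ (n / M) ≤ (σ ^ M)⁻¹ * σ ^ n := by
  rw [le_inv_mul_iff₀ (pow_pos hσ0 M)]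
  calc σ ^ M * ρ ^ (n / M) ≤ σ ^ M * (σ ^ M) ^ (n / M) := by gcongr
    _ = σ ^ (M * (n / M + 1)) := by ring
    _ ≤ σ ^ n := pow_le_pow_of_le_one hσ0.le hσ1 (Nat.lt_mul_div_succ n hM).le

section RealSequence

variable {d : ℕ → ℝ} {a b c g : ℝ} {M : ℕ}

theorem le_exp_mul_add_of_linear_growth (hM : 0 < M) (hd : ∀ n, 0 ≤ d n) (hb : 0 ≤ b)
    (hc : 0 ≤ c) (hgrowth : ∀ n, d (n + 1) ≤ c * d n + b) (n : ℕ) :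
    d n ≤ Real.exp (M * c) * (d (M * (n / M)) + M * b) := by
  have hgrowth' (k : ℕ) : d (k + 1) ≤ (1 + c) * d k + b := by linarith [hgrowth k, hd k]
  have hn : n ∈ Finset.Ico (M * (n / M)) (M * (n / M) + M) :=
    Finset.mem_Ico.2 ⟨Nat.mul_div_le n M, Nat.lt_mul_div_succ n hM⟩
  have h := discrete_gronwall_Ico (hd _) (fun k _ => hgrowth' k) (fun _ _ => hc) (fun _ _ => hb) hn
  simpa [mul_comm] using h

theorem le_max_of_sampled_le_max {ρ σ : ℝ} (hM : 0 < M) (hd : ∀ n, 0 ≤ d n) (ha : 0 ≤ a)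
    (hb : 0 ≤ b) (hc : 0 ≤ c) (hg : 0 ≤ g) (hρ : 0 ≤ ρ) (hσ0 : 0 < σ) (hσ1 : σ ≤ 1)
    (hρσ : ρ ≤ σ ^ M) (hgrowth : ∀ n, d (n + 1) ≤ c * d n + b)
    (hsampled : ∀ k, d (M * k) ≤ max (a * ρ ^ k) g) (n : ℕ) :
    d n ≤ max (2 * Real.exp (M * c) * (σ ^ M)⁻¹ * a * σ ^ n)
      (2 * Real.exp (M * c) * (g + M * b)) := by
  have hsum : d (M * (n / M)) ≤ a * ρ ^ (n / M) + g :=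
    (hsampled _).trans (max_le_add_of_nonneg (by positivity) hg)
  have hdecay := pow_div_le_of_le_pow hM hρ hσ0 hσ1 hρσ n
  calc d n ≤ Real.exp (M * c) * (d (M * (n / M)) + M * b) :=
        le_exp_mul_add_of_linear_growth hM hd hb hc hgrowth n
    _ ≤ Real.exp (M * c) * (a * ρ ^ (n / M) + g + M * b) := by gcongr
    _ ≤ Real.exp (M * c) * (a * ((σ ^ M)⁻¹ * σ ^ n) + g + M * b) := by gcongr
    _ = Real.exp (M * c) * (σ ^ M)⁻¹ * a * σ ^ n + Real.exp (M * c) * (g + M * b) := by ring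
    _ ≤ max (2 * (Real.exp (M * c) * (σ ^ M)⁻¹ * a * σ ^ n))
          (2 * (Real.exp (M * c) * (g + M * b))) := add_le_max_two_mul _ _
    _ = _ := by simp only [mul_assoc]

end RealSequence

section GeneralSystem

variable {X U : Type*}

/-- Solution of `x⁺ = f(x, u)` starting at `ξ`; unlike `traj`, it allows arbitrary state and input
spaces. -/
def trajectory (f : X → U → X) (ξ : X) (u : ℕ → U) : ℕ → X
  | 0 => ξ
  | k + 1 => f (trajectory f ξ u k) (u k)

variable [SeminormedAddCommGroup U] {f : X → U → X} {V : X → ℝ}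

/-- `K`-boundedness of `f` with linear `κ₁`, where the size `V` of a state replaces its distance
to `A`. -/
def LinearlyKBounded (f : X → U → X) (V : X → ℝ) : Prop :=
  ∃ c : ℝ, 0 < c ∧ ∃ κ : ℝ → ℝ, ClassK κ ∧ ∀ (ξ : X) (μ : U), V (f ξ μ) ≤ c * V ξ + κ ‖μ‖

/-- Exponential input-to-state stability of the iterate `Σ^M`, that is, of the solutions sampled at
the multiples of `M`, where the size `V` of a state replaces its distance to `A`. The case `M = 1`
is stability of the system itself. -/
def IterateExpISS (f : X → U → X) (V : X → ℝ) (M : ℕ) : Prop :=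
  ∃ C ρ : ℝ, ∃ γ : ℝ → ℝ, 1 ≤ C ∧ 0 ≤ ρ ∧ ρ < 1 ∧ ClassK γ ∧
    ∀ (ξ : X) (u : ℕ → U), (∃ B : ℝ, ∀ k, ‖u k‖ ≤ B) →
      ∀ k : ℕ, V (trajectory f ξ u (M * k)) ≤ max (C * ρ ^ k * V ξ) (γ (⨆ k, ‖u k‖))

theorem IterateExpISS.linearlyKBounded (hV : ∀ x, 0 ≤ V x) (h : IterateExpISS f V 1) :
    LinearlyKBounded f V := by
  obtain ⟨C, ρ, γ, hC, -, hρ1, hγ, hbound⟩ := h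
  refine ⟨C, one_pos.trans_le hC, γ, hγ, fun ξ μ => ?_⟩
  have hone : V (f ξ μ) ≤ max (C * ρ * V ξ) (γ ‖μ‖) := by
    simpa [trajectory] using hbound ξ (fun _ => μ) ⟨‖μ‖, fun _ => le_rfl⟩ 1
  have hCρ : C * ρ * V ξ ≤ C * V ξ :=
    mul_le_mul_of_nonneg_right (mul_le_of_le_one_right (by positivity) hρ1.le) (hV ξ)
  calc V (f ξ μ) ≤ max (C * V ξ) (γ ‖μ‖) := hone.trans (max_le_max_right _ hCρ)
    _ ≤ C * V ξ + γ ‖μ‖ :=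
        max_le_add_of_nonneg (mul_nonneg (by positivity) (hV ξ)) (hγ.nonneg_s7 (norm_nonneg μ))

theorem IterateExpISS.of_linearlyKBounded {M : ℕ} (hV : ∀ x, 0 ≤ V x) (hM : 0 < M)
    (hf : LinearlyKBounded f V) (h : IterateExpISS f V M) : IterateExpISS f V 1 := by
  obtain ⟨c, hc, κ, hκ, hgrowth⟩ := hf
  obtain ⟨C, ρ, γ, hC, hρ0, hρ1, hγ, hsampled⟩ := h
  obtain ⟨σ, hσ0, hσ1, hρσ⟩ := exists_lt_one_le_pow hρ1 M
  have hexp : 1 ≤ Real.exp (M * c) := Real.one_le_exp (by positivity)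
  have hσM : 1 ≤ (σ ^ M)⁻¹ := (one_le_inv₀ (pow_pos hσ0 M)).2 (pow_le_one₀ hσ0.le hσ1.le)
  have hgain : ClassK fun s => 2 * Real.exp (M * c) * (γ s + M * κ s) :=
    (hγ.add (hκ.const_mul (Nat.cast_pos.2 hM))).const_mul (by positivity)
  refine ⟨2 * Real.exp (M * c) * (σ ^ M)⁻¹ * C, σ, _, ?_, hσ0.le, hσ1, hgain,
    fun ξ u hu n => ?_⟩
  · exact one_le_mul_of_one_le_of_one_le
      (one_le_mul_of_one_le_of_one_le (one_le_mul_of_one_le_of_one_le one_le_two hexp) hσM) hC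
  have hnorm_le (k : ℕ) : ‖u k‖ ≤ ⨆ k, ‖u k‖ := le_ciSup (bddAbove_def.2 <| by simpa using hu) k
  have hsup : 0 ≤ ⨆ k, ‖u k‖ := (norm_nonneg _).trans (hnorm_le 0)
  have hstep (k : ℕ) : V (trajectory f ξ u (k + 1)) ≤
      c * V (trajectory f ξ u k) + κ (⨆ k, ‖u k‖) :=
    (hgrowth _ _).trans (by gcongr; exact hκ.apply_le_apply (norm_nonneg _) (hnorm_le k))
  have hall := le_max_of_sampled_le_max hM (fun _ => hV _)
    (mul_nonneg (zero_le_one.trans hC) (hV ξ)) (hκ.nonneg_s7 hsup) hc.le (hγ.nonneg_s7 hsup) hρ0 hσ0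
    hσ1.le hρσ hstep (fun k => by simpa only [mul_right_comm] using hsampled ξ u hu k) n
  rw [one_mul]
  convert hall using 2
  ring

theorem stmt7_general (f : X → U → X) (V : X → ℝ) (hV : ∀ x, 0 ≤ V x) :
    IterateExpISS f V 1 ↔ LinearlyKBounded f V ∧ ∃ M : ℕ, 0 < M ∧ IterateExpISS f V M :=
  ⟨fun h => ⟨h.linearlyKBounded hV, 1, one_pos, h⟩,
    fun ⟨hf, _, hM, h⟩ => h.of_linearlyKBounded hV hM hf⟩

end GeneralSystem

theorem traj_eq_trajectory (F : lp E ⊤ → lp P ⊤ → lp E ⊤) : traj F = trajectory F := by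
  funext ξ u k
  induction k with
  | zero => rfl
  | succ k ih => rw [traj, trajectory, ih]

/-- eISS of `Σ` is equivalent to `K`-boundedness of `f` with linear `κ₁` together
with eISS of some `M`-iterate `Σ^M`. -/
theorem stmt7
    [∀ i, NormedSpace ℝ (E i)] [∀ i, FiniteDimensional ℝ (E i)] [∀ i, Nontrivial (E i)]
    [∀ i, NormedSpace ℝ (P i)] [∀ i, FiniteDimensional ℝ (P i)] [∀ i, Nontrivial (P i)]
    (F : lp E ⊤ → lp P ⊤ → lp E ⊤)
    (A : Set (lp E ⊤)) (hAne : A.Nonempty) (hAcl : IsClosed A) :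
    eISS F A ↔
      ((∃ c : ℝ, 0 < c ∧ ∃ κ₂ : ℝ → ℝ, ClassK κ₂ ∧
          ∀ (ξ : lp E ⊤) (μ : lp P ⊤),
            Metric.infDist (F ξ μ) A ≤ c * Metric.infDist ξ A + κ₂ ‖μ‖) ∧
        ∃ M : ℕ, 0 < M ∧ ∃ C ρ : ℝ, ∃ γ : ℝ → ℝ, 1 ≤ C ∧ 0 ≤ ρ ∧ ρ < 1 ∧ ClassK γ ∧
          ∀ (ξ : lp E ⊤) (u : ℕ → lp P ⊤), AdmInput u →
            ∀ k : ℕ, Metric.infDist (traj F ξ u (M * k)) A ≤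
              max (C * ρ ^ k * Metric.infDist ξ A) (γ (inputNorm u))) := by
  simpa only [eISS, AdmInput, inputNorm, traj_eq_trajectory, LinearlyKBounded, IterateExpISS,
    one_mul] using stmt7_general F (Metric.infDist · A) fun _ => Metric.infDist_nonneg

end System
end
end
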